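/- arXiv:2411.04860 — 3 statements merged into one kernel-verified Lean document; each statement's English description precedes it below -/
import Mathlib

section
/- Let G be a finite or countably infinite set of generators of a unital C*-algebra A. Then the following are equivalent: (i) G is hyperrigid; (ii) for all separable complex Hilbert spaces H and K, all representations π : A → B(H) and ρ : A → B(K), and every isometry V ∈ B(H,K), if π(g) = V*ρ(g)V for all g ∈ G, then π(a) = V*ρ(a)V for all a ∈ A; (iii) for all separable complex Hilbert spaces H and K, all representations π : A → B(H) and ρ : A → B(K), and every isometry V ∈ B(H,K), if π(g) = V*ρ(g)V for all g ∈ G, then Vπ(a) = ρ(a)V for all a ∈ A. Moreover, if G is hyperrigid and π(g) = V*ρ(g)V for all g ∈ G with V an isometry, then π(a) = V*ρ(a)V for all a ∈ A. -/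
/-!
Call the two rigidity conditions on compressions `CompressionRigid G` (agreement on `G` implies
agreement on `A`) and `IntertwiningRigid G` (agreement on `G` implies that `V` intertwines). They are
equivalent by a direct computation with `a* a`.

*Hyperrigid implies compression rigid* (`Hyperrigid.compressionRigid`). Given `π = V* ρ V` on `G`, add
a faithful separable representation to `ρ`, so that `ρ`, and hence `π ⊕ ρ`, is faithful. The UCP map
`T ↦ V* T₂₂ V ⊕ T₂₂` on the direct sum fixes `(π ⊕ ρ)(g)` for `g ∈ G`. As a constant sequence it must
fix `(π ⊕ ρ)(a)` for all `a`, which says `π(a) = V* ρ(a) V`. A faithful separable representation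
exists (`exists_faithful_rep`) because `A` is separable, being generated by a countable set.

*Intertwining rigid implies hyperrigid* (`IntertwiningRigid.hyperrigid`). Let `Φ k` be UCP with
`Φ k (π g) → π g` on `G`. Choose `ξ k` in the unit ball at which `Φ k (π a) - π a` almost attains its
norm, and let `U` be an ultrafilter finer than `atTop`. On `A ⊗ A` the forms
`⟨a ⊗ x, b ⊗ y⟩ = ⟨π x ξ k, Φ k (π (a* b)) π y ξ k⟩` are positive semidefinite by complete positivity,
and they are bounded in `k`, so they have a limit along `U`. Its completion `K` carries a
representation `ρ` by left multiplication on the first factor, and is separable. The subspace given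
by `1 ⊗ A` is the ultralimit of the cyclic spaces generated by `ξ k`, with representation `π₀`; its
inclusion `V` satisfies `π₀ = V* ρ V` on `G` by the hypothesis on `Φ k`. Hence `V π₀(a) = ρ(a) V`,
that is, `1 ⊗ a = a ⊗ 1` in `K`. By the Schwarz inequality for `Φ k`, the squared norm of
`(Φ k (π a) - π a) ξ k` is at most the form at `a ⊗ 1 - 1 ⊗ a`, which tends to `0` along `U`
(`IntertwiningRigid.tendsto_apply`).
-/

open scoped ComplexOrder
open Filter Topology ContinuousLinearMap

noncomputable section

/-- An element of a star ring is *positive* (in the C*-algebra sense) iff it factors as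
`star y * y`. -/
def IsPosElem {R : Type*} [Mul R] [Star R] (x : R) : Prop := ∃ y, x = star y * y

/-- A linear map between star rings is *completely positive* if each of its matrix
amplifications preserves positivity. -/
def IsCompletelyPositive {A B : Type*} [NonUnitalNonAssocSemiring A] [StarRing A]
    [NonUnitalNonAssocSemiring B] [StarRing B] (Φ : A → B) : Prop :=
  ∀ (n : ℕ) (M : Matrix (Fin n) (Fin n) A), IsPosElem M → IsPosElem (M.map Φ)

/-- A bundled separable complex Hilbert space. -/
structure SepHilbertSpace : Type 1 where
  carrier : Type
  [ng : NormedAddCommGroup carrier]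
  [ip : InnerProductSpace ℂ carrier]
  [cs : CompleteSpace carrier]
  [sep : TopologicalSpace.SeparableSpace carrier]

attribute [instance] SepHilbertSpace.ng SepHilbertSpace.ip SepHilbertSpace.cs
  SepHilbertSpace.sep

section Defs

variable {A : Type*} [CStarAlgebra A]

/-- A state on a unital C*-algebra: a positive linear functional sending the unit to `1`. -/
def IsStateLF (φ : A →ₗ[ℂ] ℂ) : Prop := φ 1 = 1 ∧ ∀ a : A, 0 ≤ φ (star a * a)

/-- A character of a unital C*-algebra: a nonzero multiplicative linear functional. -/
def IsCharacterLF (χ : A →ₗ[ℂ] ℂ) : Prop := χ ≠ 0 ∧ ∀ a b : A, χ (a * b) = χ a * χ b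

/-- Arveson's hyperrigidity for a countable generating subset `G` of a unital C*-algebra. -/
def Hyperrigid (G : Set A) : Prop :=
  G.Countable ∧ (StarAlgebra.adjoin ℂ G).topologicalClosure = ⊤ ∧
    ∀ (Hs : SepHilbertSpace) (π : A →⋆ₐ[ℂ] (Hs.carrier →L[ℂ] Hs.carrier)),
      Function.Injective π →
      ∀ Φ : ℕ → ((Hs.carrier →L[ℂ] Hs.carrier) →ₗ[ℂ] (Hs.carrier →L[ℂ] Hs.carrier)),
        (∀ k, IsCompletelyPositive (Φ k) ∧ Φ k 1 = 1) →
        (∀ g ∈ G, Tendsto (fun k => ‖Φ k (π g) - π g‖) atTop (nhds 0)) →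
        ∀ a : A, Tendsto (fun k => ‖Φ k (π a) - π a‖) atTop (nhds 0)

/-- Salomon's rigidity at `0`: sequences of contractive positive functionals vanishing
along `G` vanish everywhere. -/
def RigidAtZero (G : Set A) : Prop :=
  ∀ ψ : ℕ → (A →ₗ[ℂ] ℂ),
    (∀ n, (∀ a : A, ‖ψ n a‖ ≤ ‖a‖) ∧ ∀ a : A, 0 ≤ ψ n (star a * a)) →
    (∀ g ∈ G, Tendsto (fun n => ψ n g) atTop (nhds (0 : ℂ))) →
    ∀ a : A, Tendsto (fun n => ψ n a) atTop (nhds (0 : ℂ))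

/-- A subset of a C*-algebra which is a two-sided ideal (a linear subspace closed under
multiplication by arbitrary algebra elements on both sides). -/
def IsTwoSidedIdealSet (J : Set A) : Prop :=
  (0 : A) ∈ J ∧ (∀ x ∈ J, ∀ y ∈ J, x + y ∈ J) ∧ (∀ (c : ℂ), ∀ x ∈ J, c • x ∈ J) ∧
    ∀ x ∈ J, ∀ b : A, b * x ∈ J ∧ x * b ∈ J

end Defs

section Decomp

variable {A : Type*} [CStarAlgebra A]
variable {H K : Type} [NormedAddCommGroup H] [InnerProductSpace ℂ H] [CompleteSpace H]
  [NormedAddCommGroup K] [InnerProductSpace ℂ K] [CompleteSpace K]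

/-- `(π, ρ, R)` has an isometric `χ`-decomposition relative to `(H₀, H₁, K₀, K₁)`. -/
def HasIsometricChiDecompositionRel (π : A →⋆ₐ[ℂ] (H →L[ℂ] H)) (ρ : A →⋆ₐ[ℂ] (K →L[ℂ] K))
    (R : H →L[ℂ] K) (χ : A →ₗ[ℂ] ℂ)
    (H₀ H₁ : Submodule ℂ H) (K₀ K₁ : Submodule ℂ K) : Prop :=
  H₁ = H₀ᗮ ∧ H₀ = H₁ᗮ ∧ K₁ = K₀ᗮ ∧ K₀ = K₁ᗮ ∧
  (∀ a : A, ∀ x ∈ H₀, π a x ∈ H₀) ∧ (∀ a : A, ∀ x ∈ H₁, π a x ∈ H₁) ∧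
  (∀ a : A, ∀ y ∈ K₀, ρ a y ∈ K₀) ∧ (∀ a : A, ∀ y ∈ K₁, ρ a y ∈ K₁) ∧
  (∀ a : A, ∀ x ∈ H₁, π a x = χ a • x) ∧ (∀ a : A, ∀ y ∈ K₁, ρ a y = χ a • y) ∧
  (∀ x ∈ H₀, R x ∈ K₀) ∧ (∀ x ∈ H₁, R x ∈ K₁) ∧
  (∀ x ∈ H₀, ‖R x‖ = ‖x‖) ∧
  (∀ a : A, ∀ x ∈ H₀, π a x = adjoint R (ρ a (R x)))

/-- `(π, ρ, R)` has a unitary `χ`-decomposition relative to `(H₀, H₁, K₀, K₁)`: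
an isometric one whose isometric part is moreover onto. -/
def HasUnitaryChiDecompositionRel (π : A →⋆ₐ[ℂ] (H →L[ℂ] H)) (ρ : A →⋆ₐ[ℂ] (K →L[ℂ] K))
    (R : H →L[ℂ] K) (χ : A →ₗ[ℂ] ℂ)
    (H₀ H₁ : Submodule ℂ H) (K₀ K₁ : Submodule ℂ K) : Prop :=
  HasIsometricChiDecompositionRel π ρ R χ H₀ H₁ K₀ K₁ ∧ ∀ y ∈ K₀, ∃ x ∈ H₀, R x = y

/-- `(π, ρ, R)` has an isometric `χ`-decomposition. -/
def HasIsometricChiDecomposition (π : A →⋆ₐ[ℂ] (H →L[ℂ] H)) (ρ : A →⋆ₐ[ℂ] (K →L[ℂ] K))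
    (R : H →L[ℂ] K) (χ : A →ₗ[ℂ] ℂ) : Prop :=
  ∃ (H₀ H₁ : Submodule ℂ H) (K₀ K₁ : Submodule ℂ K),
    HasIsometricChiDecompositionRel π ρ R χ H₀ H₁ K₀ K₁

/-- `(π, ρ, R)` has a unitary `χ`-decomposition. -/
def HasUnitaryChiDecomposition (π : A →⋆ₐ[ℂ] (H →L[ℂ] H)) (ρ : A →⋆ₐ[ℂ] (K →L[ℂ] K))
    (R : H →L[ℂ] K) (χ : A →ₗ[ℂ] ℂ) : Prop :=
  ∃ (H₀ H₁ : Submodule ℂ H) (K₀ K₁ : Submodule ℂ K),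
    HasUnitaryChiDecompositionRel π ρ R χ H₀ H₁ K₀ K₁

end Decomp

/-- Continuous functional calculus `f(T)` of a normal operator `T` with spectrum contained
in a compact set `X ⊆ ℂ`, applied to `f ∈ C(X, ℂ)`. -/
def cfcOnSet {H : Type} [NormedAddCommGroup H] [InnerProductSpace ℂ H] [CompleteSpace H]
    (T : H →L[ℂ] H) (hT : IsStarNormal T) {X : Set ℂ} (hX : spectrum ℂ T ⊆ X)
    (f : C(X, ℂ)) : H →L[ℂ] H :=
  cfcHom hT (f.comp ⟨Set.inclusion hX, continuous_inclusion hX⟩)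

/-! ### Separability, and representations from pre-inner products -/

lemma separableSpace_of_adjoin {A : Type*} [CStarAlgebra A] {G : Set A}
    (hGc : G.Countable) (hGgen : (StarAlgebra.adjoin ℂ G).topologicalClosure = ⊤) :
    TopologicalSpace.SeparableSpace A := by
  have hc : (G ∪ star G).Countable := by
    refine hGc.union ?_
    rw [← Set.image_star]
    exact hGc.image _
  have hmc : ((Submonoid.closure (G ∪ star G) : Submonoid A) : Set A).Countable := by
    have := hc.to_subtype
    rw [← Set.countable_coe_iff, Submonoid.closure_eq_mrange]
    exact (FreeMonoid.lift (M := A) ((↑) : (G ∪ star G : Set A) → A)).mrangeRestrict_surjective.countable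
  have h1 : TopologicalSpace.IsSeparable ((StarAlgebra.adjoin ℂ G : StarSubalgebra ℂ A) : Set A) := by
    have : ((StarAlgebra.adjoin ℂ G : StarSubalgebra ℂ A) : Set A) =
        (Submodule.span ℂ ((Submonoid.closure (G ∪ star G) : Submonoid A) : Set A) : Set A) := by
      rw [← Algebra.adjoin_eq_span, ← StarAlgebra.adjoin_toSubalgebra]
      rfl
    rw [this]
    exact hmc.isSeparable.span
  have h2 := h1.closure
  rw [← StarSubalgebra.topologicalClosure_coe, hGgen] at h2
  rwa [← TopologicalSpace.isSeparable_univ_iff]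

/-- A separable Hilbert space in any universe is isometric to some `ℓ²(S)` with `S ⊆ ℕ`, hence to a
bundled space living in `Type`. -/
lemma exists_sepHilbertSpace (K : Type*) [NormedAddCommGroup K] [InnerProductSpace ℂ K]
    [CompleteSpace K] [TopologicalSpace.SeparableSpace K] :
    ∃ Ks : SepHilbertSpace, Nonempty (K ≃ₗᵢ[ℂ] Ks.carrier) := by
  obtain ⟨w, b, hb⟩ := exists_hilbertBasis ℂ K
  have hw : w.Countable := by
    -- Distinct unit basis vectors are `√2` apart, so the balls of radius `1/2` around them are
    -- disjoint, and a separable space holds only countably many disjoint open sets.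
    have hdisj : Pairwise (Function.onFun Disjoint fun i : w => Metric.ball (i : K) (1 / 2)) := by
      intro i j hij
      refine Metric.ball_disjoint_ball ?_
      have h1 : ‖(i : K)‖ = 1 := by simpa [hb] using b.orthonormal.1 i
      have h2 : ‖(j : K)‖ = 1 := by simpa [hb] using b.orthonormal.1 j
      have h3 : inner ℂ (i : K) (j : K) = 0 := by simpa [hb] using b.orthonormal.2 hij
      have h4 := @norm_sub_sq ℂ K _ _ _ (i : K) (j : K)
      rw [h1, h2, h3] at h4
      rw [dist_eq_norm]
      norm_num at h4
      nlinarith [norm_nonneg ((i : K) - j)]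
    have := Pairwise.countable_of_isOpen_disjoint hdisj (fun i => Metric.isOpen_ball)
      (fun i => ⟨i, by simp⟩)
    exact Set.countable_coe_iff.mp this
  have := hw.to_subtype
  obtain ⟨f, hf⟩ := exists_injective_nat w
  let e := Equiv.ofInjective f hf
  have ho : Orthonormal ℂ (fun i : Set.range f => b (e.symm i)) :=
    b.orthonormal.comp _ e.symm.injective
  have hsp : ⊤ ≤ (Submodule.span ℂ (Set.range (fun i : Set.range f => b (e.symm i)))).topologicalClosure := by
    have : Set.range (fun i : Set.range f => b (e.symm i)) = Set.range b :=
      e.symm.surjective.range_comp b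
    rw [this, b.dense_span]
  let b' := HilbertBasis.mk ho hsp
  have : TopologicalSpace.SeparableSpace (lp (fun _ : Set.range f => ℂ) 2) :=
    b'.repr.surjective.denseRange.separableSpace b'.repr.continuous
  exact ⟨⟨lp (fun _ : Set.range f => ℂ) 2⟩, ⟨b'.repr⟩⟩

/-- The GNS-type construction: if a C*-algebra acts on a pre-inner product space by linear maps with
`⟨a y, z⟩ = ⟨y, a* z⟩`, then the action extends to a representation on the completion. Boundedness of
the action is automatic, because `‖a‖² - a* a` has the form `s* s`. -/
lemma exists_rep_of_core.{u, v} {A : Type u} {Y : Type v} [CStarAlgebra A] [AddCommGroup Y]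
    [Module ℂ Y]
    (c : PreInnerProductSpace.Core ℂ Y) (m : A →ₐ[ℂ] Module.End ℂ Y)
    (hm : ∀ a y z, c.inner (m a y) z = c.inner y (m (star a) z)) :
    ∃ (K : Type v) (_ : NormedAddCommGroup K) (_ : InnerProductSpace ℂ K) (_ : CompleteSpace K)
      (ι : Y →ₗ[ℂ] K) (ρ : A →⋆ₐ[ℂ] (K →L[ℂ] K)),
      DenseRange ι ∧ (∀ y z, inner ℂ (ι y) (ι z) = c.inner y z) ∧
        ∀ a y, ρ a (ι y) = ι (m a y) := by
  let i1 : SeminormedAddCommGroup Y := InnerProductSpace.Core.toSeminormedAddCommGroup (c := c)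
  let i2 : InnerProductSpace ℂ Y := InnerProductSpace.ofCore c
  have hin : ∀ y z : Y, inner ℂ y z = c.inner y z := fun _ _ => rfl
  let ι : Y →ₗ[ℂ] UniformSpace.Completion Y := (UniformSpace.Completion.toComplₗᵢ (𝕜 := ℂ)).toLinearMap
  have hι : ∀ y z, inner ℂ (ι y) (ι z) = c.inner y z := fun y z =>
    (UniformSpace.Completion.toComplₗᵢ (𝕜 := ℂ) (E := Y)).inner_map_map y z
  have hιn : ∀ y, ‖ι y‖ = ‖y‖ := fun y => (UniformSpace.Completion.toComplₗᵢ (𝕜 := ℂ) (E := Y)).norm_map y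
  have hd : DenseRange ι := UniformSpace.Completion.denseRange_coe
  have hb : ∀ a y, ‖ι (m a y)‖ ≤ ‖a‖ * ‖ι y‖ := by
    intro a y
    rw [hιn, hιn]
    let := CStarAlgebra.spectralOrder A
    let := CStarAlgebra.spectralOrderedRing A
    have h1 : star a * a ≤ algebraMap ℝ A (‖a‖ ^ 2) := by
      rw [sq, ← CStarRing.norm_star_mul_self]
      exact IsSelfAdjoint.le_algebraMap_norm_self (IsSelfAdjoint.star_mul_self a)
    obtain ⟨s, hs⟩ := CStarAlgebra.nonneg_iff_eq_star_mul_self.mp (sub_nonneg.mpr h1)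
    have h2 : 0 ≤ RCLike.re (inner ℂ (m s y) (m s y)) := inner_self_nonneg
    rw [hin, hm, ← Module.End.mul_apply, ← map_mul, ← hs, map_sub] at h2
    have h3 : m (algebraMap ℝ A (‖a‖ ^ 2)) y = ((‖a‖ ^ 2 : ℝ) : ℂ) • y := by
      rw [Algebra.algebraMap_eq_smul_one, ← Complex.coe_smul, map_smul, map_one]; rfl
    rw [LinearMap.sub_apply, h3, map_mul, Module.End.mul_apply, ← hin, inner_sub_right, inner_smul_right, hin y (m (star a) _),
      ← hm, ← hin, map_sub] at h2
    rw [inner_self_eq_norm_sq_to_K, inner_self_eq_norm_sq_to_K] at h2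
    norm_cast at h2
    simp only [sub_nonneg] at h2
    rw [RCLike.re_eq_complex_re, Complex.re_ofReal_mul, ← RCLike.re_eq_complex_re,
      RCLike.ofReal_re, ← mul_pow] at h2
    exact le_of_sq_le_sq h2 (by positivity)
  let r : A → (UniformSpace.Completion Y →L[ℂ] UniformSpace.Completion Y) := fun a =>
    (ι ∘ₗ m a).extendOfNorm ι
  have hr : ∀ a y, r a (ι y) = ι (m a y) := fun a y =>
    LinearMap.extendOfNorm_eq hd ⟨‖a‖, hb a⟩ y
  have hext : ∀ S T : UniformSpace.Completion Y →L[ℂ] UniformSpace.Completion Y,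
      (∀ y, S (ι y) = T (ι y)) → S = T := fun S T h =>
    DFunLike.coe_injective (hd.equalizer S.continuous T.continuous (funext h))
  let ρ : A →⋆ₐ[ℂ] (UniformSpace.Completion Y →L[ℂ] UniformSpace.Completion Y) :=
    { toFun := r
      map_one' := hext _ _ fun y => by simp [hr]
      map_zero' := hext _ _ fun y => by simp [hr]
      map_mul' := fun a b => hext _ _ fun y => by simp [hr]
      map_add' := fun a b => hext _ _ fun y => by simp [hr]
      commutes' := fun z => hext _ _ fun y => by
        simp [hr, Algebra.algebraMap_eq_smul_one]
      map_star' := fun a => by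
        rw [ContinuousLinearMap.star_eq_adjoint, ContinuousLinearMap.eq_adjoint_iff]
        intro u v
        refine hd.induction_on₂ (p := fun u v => inner ℂ (r (star a) u) v = inner ℂ u (r a v)) ?_ ?_ u v
        · exact isClosed_eq (by fun_prop) (by fun_prop)
        · intro y z
          rw [hr, hr, hι, hι, hm, star_star] }
  exact ⟨UniformSpace.Completion Y, inferInstance, inferInstance, inferInstance, ι, ρ, hd, hι, hr⟩

/-! ### Compression and intertwining rigidity -/

/-- `G` is *compression rigid* if, for an isometry `V` between separable Hilbert spaces, a
representation `π` that agrees on `G` with the compression `V* ρ V` of a representation `ρ` agrees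
with it on the whole algebra. -/
def CompressionRigid {A : Type*} [CStarAlgebra A] (G : Set A) : Prop :=
  ∀ (Hs Ks : SepHilbertSpace)
    (π : A →⋆ₐ[ℂ] (Hs.carrier →L[ℂ] Hs.carrier))
    (ρ : A →⋆ₐ[ℂ] (Ks.carrier →L[ℂ] Ks.carrier))
    (V : Hs.carrier →L[ℂ] Ks.carrier),
    (∀ h, ‖V h‖ = ‖h‖) →
    (∀ g ∈ G, π g = adjoint V ∘L ρ g ∘L V) →
    ∀ a : A, π a = adjoint V ∘L ρ a ∘L V

/-- `G` is *intertwining rigid* if, for an isometry `V` between separable Hilbert spaces, agreement of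
`π` with the compression `V* ρ V` on `G` forces `V` to intertwine `π` and `ρ`. -/
def IntertwiningRigid {A : Type*} [CStarAlgebra A] (G : Set A) : Prop :=
  ∀ (Hs Ks : SepHilbertSpace)
    (π : A →⋆ₐ[ℂ] (Hs.carrier →L[ℂ] Hs.carrier))
    (ρ : A →⋆ₐ[ℂ] (Ks.carrier →L[ℂ] Ks.carrier))
    (V : Hs.carrier →L[ℂ] Ks.carrier),
    (∀ h, ‖V h‖ = ‖h‖) →
    (∀ g ∈ G, π g = adjoint V ∘L ρ g ∘L V) →
    ∀ a : A, V ∘L π a = ρ a ∘L V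

lemma eq_compression_iff {H K : Type*} [NormedAddCommGroup H] [InnerProductSpace ℂ H]
    [CompleteSpace H] [NormedAddCommGroup K] [InnerProductSpace ℂ K] [CompleteSpace K]
    (S : H →L[ℂ] H) (T : K →L[ℂ] K) (V : H →L[ℂ] K) :
    S = adjoint V ∘L T ∘L V ↔ ∀ x y, inner ℂ (S x) y = inner ℂ (T (V x)) (V y) := by
  constructor
  · rintro rfl x y
    simp [adjoint_inner_left]
  · intro h
    ext x
    refine ext_inner_right ℂ fun y => ?_
    simp [adjoint_inner_left, h]

/-- `‖V π(a) x - ρ(a) V x‖² = ⟨(V* ρ(a* a) V - π(a* a)) x, x⟩` once the compression of `ρ` by `V` is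
`π` on all of the algebra. -/
lemma CompressionRigid.intertwiningRigid {A : Type*} [CStarAlgebra A] {G : Set A}
    (h : CompressionRigid G) : IntertwiningRigid G := by
  intro Hs Ks π ρ V hV hg a
  have hV' : ∀ x y, inner ℂ (V x) (V y) = inner ℂ x y := fun x y =>
    LinearIsometry.inner_map_map ⟨V.toLinearMap, hV⟩ x y
  have hall := fun a => (eq_compression_iff _ _ V).mp (h Hs Ks π ρ V hV hg a)
  ext x
  have hadj : ∀ y z, inner ℂ (π a y) z = inner ℂ y (π (star a) z) := fun y z => by
    rw [map_star, ContinuousLinearMap.star_eq_adjoint, adjoint_inner_right]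
  have hadj' : ∀ y z, inner ℂ (ρ a y) z = inner ℂ y (ρ (star a) z) := fun y z => by
    rw [map_star, ContinuousLinearMap.star_eq_adjoint, adjoint_inner_right]
  have h1 : inner ℂ (ρ a (V x)) (ρ a (V x)) = inner ℂ (π a x) (π a x) := by
    rw [hadj', hadj, ← inner_conj_symm, ← mul_apply_eq_comp, ← map_mul, ← hall, map_mul,
      mul_apply_eq_comp, inner_conj_symm]
  have h2 : inner ℂ (ρ a (V x)) (V (π a x)) = inner ℂ (π a x) (π a x) := (hall a _ _).symm
  have h3 : inner ℂ (V (π a x)) (ρ a (V x)) = inner ℂ (π a x) (π a x) := by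
    rw [← inner_conj_symm, h2, inner_conj_symm]
  have : inner ℂ (V (π a x) - ρ a (V x)) (V (π a x) - ρ a (V x)) = (0 : ℂ) := by
    rw [inner_sub_left, inner_sub_right, inner_sub_right, h1, h2, h3, hV']; ring
  simpa [sub_eq_zero] using this

lemma IntertwiningRigid.compressionRigid {A : Type*} [CStarAlgebra A] {G : Set A}
    (h : IntertwiningRigid G) : CompressionRigid G := by
  intro Hs Ks π ρ V hV hg a
  have hV' : ∀ x y, inner ℂ (V x) (V y) = inner ℂ x y := fun x y =>
    LinearIsometry.inner_map_map ⟨V.toLinearMap, hV⟩ x y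
  rw [eq_compression_iff]
  intro x y
  have := DFunLike.congr_fun (h Hs Ks π ρ V hV hg a) x
  simp only [ContinuousLinearMap.comp_apply] at this
  rw [← this, hV']

/-- Intertwining rigidity is defined with Hilbert spaces in `Type`, but it applies to separable
Hilbert spaces in any universe. The hypothesis `π g = V* ρ g V` is stated through inner products. -/
lemma IntertwiningRigid.apply_eq {A : Type*} [CStarAlgebra A] {G : Set A}
    (h : IntertwiningRigid G) {H K : Type*} [NormedAddCommGroup H] [InnerProductSpace ℂ H]
    [CompleteSpace H] [TopologicalSpace.SeparableSpace H]
    [NormedAddCommGroup K] [InnerProductSpace ℂ K] [CompleteSpace K]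
    [TopologicalSpace.SeparableSpace K]
    (π : A →⋆ₐ[ℂ] (H →L[ℂ] H)) (ρ : A →⋆ₐ[ℂ] (K →L[ℂ] K)) (V : H →L[ℂ] K)
    (hV : ∀ x, ‖V x‖ = ‖x‖)
    (hg : ∀ g ∈ G, ∀ x y, inner ℂ (π g x) y = inner ℂ (ρ g (V x)) (V y)) (a : A) (x : H) :
    V (π a x) = ρ a (V x) := by
  obtain ⟨Hs, ⟨e⟩⟩ := exists_sepHilbertSpace H
  obtain ⟨Ks, ⟨f⟩⟩ := exists_sepHilbertSpace K
  have := h Hs Ks (e.conjStarAlgEquiv.toStarAlgHom.comp π)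
    (f.conjStarAlgEquiv.toStarAlgHom.comp ρ)
    (f.toContinuousLinearEquiv.toContinuousLinearMap ∘L V ∘L
      e.symm.toContinuousLinearEquiv.toContinuousLinearMap)
    (by simp [hV])
    (by
      intro g hgG
      rw [eq_compression_iff]
      intro x y
      have := hg g hgG (e.symm x) (e.symm y)
      simpa [← LinearIsometryEquiv.inner_map_eq_flip] using this) a
  have := DFunLike.congr_fun this (e x)
  simpa using this

/-! ### Faithful representations of separable C*-algebras -/

/-- Separate `-a* a` from the closed cone of positive elements by a real functional, and extend the
symmetrization of that functional complex-linearly. -/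
lemma exists_positive_functional {A : Type*} [CStarAlgebra A] (a : A) (ha : a ≠ 0) :
    ∃ φ : A →L[ℂ] ℂ, (∀ x, 0 ≤ φ (star x * x)) ∧ φ (star a * a) ≠ 0 := by
  let _ := CStarAlgebra.spectralOrder A
  let _ := CStarAlgebra.spectralOrderedRing A
  have hc : 0 ≤ star a * a := star_mul_self_nonneg a
  have hn : -(star a * a) ∉ ProperCone.positive ℝ A := by
    rw [ProperCone.mem_positive]
    intro h
    have : star a * a = 0 := le_antisymm (by simpa using h) hc
    exact ha (CStarRing.star_mul_self_eq_zero_iff a |>.mp this)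
  obtain ⟨f, hf, hf0⟩ := ProperCone.hyperplane_separation_point _ hn
  let g : A →L[ℝ] ℝ := f + f ∘L (starL' ℝ : A ≃L[ℝ] A).toContinuousLinearMap
  have hg : ∀ x, g x = f x + f (star x) := fun x => rfl
  have hφ : ∀ x, IsSelfAdjoint x → StrongDual.extendRCLike (𝕜 := ℂ) g x = ((2 * f x : ℝ) : ℂ) := by
    intro x hx
    rw [StrongDual.extendRCLike_apply, hg, hg]
    simp [hx.star_eq, two_mul]
  refine ⟨StrongDual.extendRCLike (𝕜 := ℂ) g, fun x => ?_, ?_⟩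
  · rw [hφ _ (IsSelfAdjoint.star_mul_self x)]
    have := hf (star x * x) (by rw [ProperCone.mem_positive]; exact star_mul_self_nonneg x)
    exact_mod_cast mul_nonneg two_pos.le this
  · rw [hφ _ (IsSelfAdjoint.star_mul_self a)]
    have : f (star a * a) ≠ 0 := by
      intro h; simp [h] at hf0
    exact_mod_cast mul_ne_zero two_ne_zero this

/-- The sets `{a | φ (a* a) ≠ 0}` form an open cover of the nonzero elements, and Lindelöf's property
selects countably many of them. -/
lemma exists_separating_sequence (A : Type*) [CStarAlgebra A]
    [TopologicalSpace.SeparableSpace A] :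
    ∃ F : ℕ → (A →L[ℂ] ℂ), (∀ n x, 0 ≤ F n (star x * x)) ∧
      ∀ x ≠ 0, ∃ n, F n (star x * x) ≠ 0 := by
  have : SecondCountableTopology A := UniformSpace.secondCountable_of_separable A
  obtain ⟨T, hT, hTU⟩ := TopologicalSpace.isOpen_iUnion_countable
    (fun φ : {φ : A →L[ℂ] ℂ // ∀ x, 0 ≤ φ (star x * x)} => {a : A | φ.1 (star a * a) ≠ 0})
    (fun φ => isOpen_ne_fun (by fun_prop) continuous_const)
  -- Inserting the zero functional makes the countable family nonempty, so a sequence enumerates it.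
  obtain ⟨F, hF⟩ := (hT.insert ⟨0, fun x => by simp⟩).exists_eq_range (Set.insert_nonempty _ _)
  refine ⟨fun n => (F n).1, fun n => (F n).2, fun x hx => ?_⟩
  obtain ⟨φ, h1, h2⟩ := exists_positive_functional x hx
  have : x ∈ ⋃ φ ∈ T, {a : A | φ.1 (star a * a) ≠ 0} := by
    rw [hTU]; exact Set.mem_iUnion.mpr ⟨⟨φ, h1⟩, h2⟩
  obtain ⟨ψ, hψ, hx'⟩ := Set.mem_iUnion₂.mp this
  obtain ⟨n, rfl⟩ : ψ ∈ Set.range F := hF ▸ Set.mem_insert_of_mem _ hψ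
  exact ⟨n, hx'⟩

/-- A weighted sum of a separating sequence of positive functionals is positive and faithful. -/
lemma exists_faithful_functional (A : Type*) [CStarAlgebra A] [TopologicalSpace.SeparableSpace A] :
    ∃ φ : A →L[ℂ] ℂ, (∀ x, 0 ≤ φ (star x * x)) ∧ ∀ x, φ (star x * x) = 0 → x = 0 := by
  obtain ⟨F, hF, hF0⟩ := exists_separating_sequence A
  obtain ⟨w, hw⟩ : ∃ w : ℕ → ℝ, ∀ n, w n = (1 / 2 : ℝ) ^ n / (‖F n‖ + 1) := ⟨_, fun _ => rfl⟩
  have hw0 : ∀ n, 0 < w n := fun n => by rw [hw]; positivity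
  have hs : Summable fun n => ((w n : ℝ) : ℂ) • F n := by
    refine Summable.of_norm_bounded (g := fun n => (1 / 2 : ℝ) ^ n) summable_geometric_two ?_
    intro n
    rw [norm_smul, Complex.norm_real, Real.norm_of_nonneg (hw0 n).le, hw, div_mul_eq_mul_div,
      div_le_iff₀ (by positivity)]
    gcongr
    linarith
  obtain ⟨Φ, hΦ⟩ := hs
  have hap : ∀ a, HasSum (fun n => ((w n : ℝ) : ℂ) * F n a) (Φ a) := fun a => by
    simpa only [ContinuousLinearMap.apply_apply, _root_.smul_apply, smul_eq_mul] using
      hΦ.mapL (ContinuousLinearMap.apply ℂ ℂ a)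
  have hnn : ∀ n x, 0 ≤ ((w n : ℝ) : ℂ) * F n (star x * x) := fun n x =>
    mul_nonneg (by exact_mod_cast (hw0 n).le) (hF n x)
  refine ⟨Φ, fun x => (hap _).nonneg fun n => hnn n x, fun x hx => ?_⟩
  by_contra hne
  have h0 := hap (star x * x)
  rw [hx, hasSum_zero_iff_of_nonneg (fun n => hnn n x)] at h0
  obtain ⟨n, hn⟩ := hF0 x hne
  have := congrFun h0 n
  simp only [Pi.zero_apply, mul_eq_zero, Complex.ofReal_eq_zero] at this
  exact this.elim (hw0 n).ne' hn

/-- A separable C*-algebra is faithfully represented on a separable Hilbert space, by the GNS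
construction for a faithful positive functional. -/
lemma exists_faithful_rep (A : Type*) [CStarAlgebra A] [TopologicalSpace.SeparableSpace A] :
    ∃ (Ms : SepHilbertSpace) (σ : A →⋆ₐ[ℂ] (Ms.carrier →L[ℂ] Ms.carrier)),
      Function.Injective σ := by
  let _ := CStarAlgebra.spectralOrder A
  let _ := CStarAlgebra.spectralOrderedRing A
  obtain ⟨φ, hφ, hφ0⟩ := exists_faithful_functional A
  let f : A →ₚ[ℂ] ℂ := PositiveLinearMap.mk₀ φ.toLinearMap (fun x hx => by
    obtain ⟨y, rfl⟩ := CStarAlgebra.nonneg_iff_eq_star_mul_self.mp hx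
    exact hφ y)
  have hf : ∀ x, f x = φ x := fun x => rfl
  have hcont : Continuous f.toPreGNS := by
    refine (f.toPreGNS.toLinearMap.mkContinuous (Real.sqrt ‖φ‖) ?_).continuous
    intro x
    rw [← sq_le_sq₀ (by positivity) (by positivity), mul_pow, Real.sq_sqrt (norm_nonneg _)]
    have h1 := f.preGNS_norm_sq (f.toPreGNS x)
    have h2 : ‖f.toPreGNS x‖ ^ 2 = ‖φ (star x * x)‖ := by
      have := congrArg norm h1
      simpa [hf] using this
    change ‖f.toPreGNS x‖ ^ 2 ≤ _
    rw [h2, sq, ← CStarRing.norm_star_mul_self]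
    exact φ.le_opNorm _
  have : TopologicalSpace.SeparableSpace f.PreGNS :=
    f.toPreGNS.surjective.denseRange.separableSpace hcont
  obtain ⟨Ms, ⟨e⟩⟩ := exists_sepHilbertSpace f.GNS
  refine ⟨Ms, e.conjStarAlgEquiv.toStarAlgHom.comp f.gnsStarAlgHom, ?_⟩
  have hinj : Function.Injective f.gnsStarAlgHom := by
    rw [injective_iff_map_eq_zero]
    intro a ha
    have h1 := f.gnsNonUnitalStarAlgHom_apply_coe (a := a) (b := f.toPreGNS 1)
    have h2 : f.gnsNonUnitalStarAlgHom a = 0 := ha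
    rw [h2] at h1
    have h3 : ‖f.leftMulMapPreGNS a (f.toPreGNS 1)‖ = 0 := by
      rw [← UniformSpace.Completion.norm_coe, ← h1]; simp
    have h4 := f.preGNS_norm_sq (f.leftMulMapPreGNS a (f.toPreGNS 1))
    rw [h3] at h4
    simp [hf] at h4
    exact hφ0 a h4.symm
  exact e.conjStarAlgEquiv.injective.comp hinj

/-! ### Direct sums, and compressions under hyperrigidity -/

lemma exists_star_mul_self_add {B : Type*} [NonUnitalCStarAlgebra B] (y z : B) :
    ∃ x, star y * y + star z * z = star x * x := by
  let _ := CStarAlgebra.spectralOrder B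
  let _ := CStarAlgebra.spectralOrderedRing B
  exact CStarAlgebra.nonneg_iff_eq_star_mul_self.mp
    (add_nonneg (star_mul_self_nonneg y) (star_mul_self_nonneg z))

/-- Sums of positive matrices are positive because matrices over a C*-algebra form a C*-algebra
(`CStarMatrix`) with the same algebraic operations. -/
lemma isPosElem_add {R : Type*} [CStarAlgebra R] {n : ℕ} {M N : Matrix (Fin n) (Fin n) R}
    (hM : IsPosElem M) (hN : IsPosElem N) : IsPosElem (M + N) := by
  let _ := CStarAlgebra.spectralOrder R
  let _ := CStarAlgebra.spectralOrderedRing R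
  obtain ⟨Y, rfl⟩ := hM
  obtain ⟨Z, rfl⟩ := hN
  obtain ⟨X, hX⟩ := exists_star_mul_self_add (B := CStarMatrix (Fin n) (Fin n) R)
    (CStarMatrix.ofMatrix Y) (CStarMatrix.ofMatrix Z)
  exact ⟨CStarMatrix.ofMatrix.symm X, hX⟩

lemma isPosElem_map_conj {L : Type*} [NormedAddCommGroup L] [InnerProductSpace ℂ L]
    [CompleteSpace L] (W : L →L[ℂ] L) {n : ℕ} {M : Matrix (Fin n) (Fin n) (L →L[ℂ] L)}
    (hM : IsPosElem M) : IsPosElem (M.map fun T => star W * T * W) := by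
  obtain ⟨Y, rfl⟩ := hM
  refine ⟨Y.map (· * W), ?_⟩
  ext1 i j
  simp [Matrix.mul_apply, Matrix.star_apply, Finset.mul_sum, Finset.sum_mul, mul_assoc]

/-- The Hilbert direct sum `Hs ⊕ Ks` together with its two isometric inclusions. -/
lemma exists_directSum (Hs Ks : SepHilbertSpace) :
    ∃ (Ls : SepHilbertSpace) (i : Hs.carrier →L[ℂ] Ls.carrier) (j : Ks.carrier →L[ℂ] Ls.carrier),
      (∀ x, adjoint i (i x) = x) ∧ (∀ x, adjoint j (j x) = x) ∧ (∀ x, adjoint i (j x) = 0) ∧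
      (∀ x, adjoint j (i x) = 0) ∧ ∀ x, i (adjoint i x) + j (adjoint j x) = x := by
  let e := WithLp.prodContinuousLinearEquiv 2 ℂ Hs.carrier Ks.carrier
  have : TopologicalSpace.SeparableSpace (WithLp 2 (Hs.carrier × Ks.carrier)) :=
    e.symm.surjective.denseRange.separableSpace e.symm.continuous
  let i : Hs.carrier →L[ℂ] WithLp 2 (Hs.carrier × Ks.carrier) :=
    e.symm.toContinuousLinearMap ∘L ContinuousLinearMap.inl ℂ _ _
  let j : Ks.carrier →L[ℂ] WithLp 2 (Hs.carrier × Ks.carrier) :=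
    e.symm.toContinuousLinearMap ∘L ContinuousLinearMap.inr ℂ _ _
  have hi : adjoint i = ContinuousLinearMap.fst ℂ _ _ ∘L e.toContinuousLinearMap := by
    symm
    rw [eq_adjoint_iff]
    intro x y
    simp [i, e, WithLp.prod_inner_apply]
  have hj : adjoint j = ContinuousLinearMap.snd ℂ _ _ ∘L e.toContinuousLinearMap := by
    symm
    rw [eq_adjoint_iff]
    intro x y
    simp [j, e, WithLp.prod_inner_apply]
  refine ⟨⟨WithLp 2 (Hs.carrier × Ks.carrier)⟩, i, j, ?_, ?_, ?_, ?_, ?_⟩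
  · intro x; rw [hi]; simp [i]
  · intro x; rw [hj]; simp [j]
  · intro x; rw [hi]; simp [j]
  · intro x; rw [hj]; simp [i]
  · intro x; rw [hi, hj]; apply e.injective; simp [i, j]

/-- The direct sum `π ⊕ ρ` of two representations, on a Hilbert direct sum with inclusions `i`
and `j`. -/
lemma exists_directSum_rep {A : Type*} [CStarAlgebra A] {Hs Ks Ls : SepHilbertSpace}
    {i : Hs.carrier →L[ℂ] Ls.carrier} {j : Ks.carrier →L[ℂ] Ls.carrier}
    (hii : ∀ x, adjoint i (i x) = x) (hjj : ∀ x, adjoint j (j x) = x)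
    (hij : ∀ x, adjoint i (j x) = 0) (hji : ∀ x, adjoint j (i x) = 0)
    (hs : ∀ x, i (adjoint i x) + j (adjoint j x) = x)
    (π : A →⋆ₐ[ℂ] (Hs.carrier →L[ℂ] Hs.carrier))
    (ρ : A →⋆ₐ[ℂ] (Ks.carrier →L[ℂ] Ks.carrier)) :
    ∃ σ : A →⋆ₐ[ℂ] (Ls.carrier →L[ℂ] Ls.carrier),
      ∀ a x, σ a x = i (π a (adjoint i x)) + j (ρ a (adjoint j x)) := by
  refine ⟨
    { toFun := fun a => i ∘L π a ∘L adjoint i + j ∘L ρ a ∘L adjoint j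
      map_one' := ?_, map_zero' := ?_, map_mul' := ?_, map_add' := ?_, commutes' := ?_
      map_star' := ?_ }, fun a x => rfl⟩
  · ext x; simp [hs]
  · intro a b; ext x; simp [hii, hjj, hij, hji]
  · ext x; simp
  · intro a b; ext x; simp; abel
  · intro z
    ext x
    simp only [Algebra.algebraMap_eq_smul_one, map_smul, map_one]
    simp [← smul_add, hs]
  · intro a
    simp only [ContinuousLinearMap.star_eq_adjoint, map_add, map_star, adjoint_comp, adjoint_adjoint,
      ContinuousLinearMap.comp_assoc]

/-- Hyperrigidity is applied to the faithful representation `π ⊕ ρ` and the constant sequence of the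
UCP map `T ↦ V* T₂₂ V ⊕ T₂₂`, which fixes `(π ⊕ ρ)(g)` for all `g ∈ G`. -/
lemma Hyperrigid.compression_of_injective {A : Type*} [CStarAlgebra A] {G : Set A}
    (h : Hyperrigid G) (Hs Ks : SepHilbertSpace)
    (π : A →⋆ₐ[ℂ] (Hs.carrier →L[ℂ] Hs.carrier))
    (ρ : A →⋆ₐ[ℂ] (Ks.carrier →L[ℂ] Ks.carrier))
    (V : Hs.carrier →L[ℂ] Ks.carrier) (hρ : Function.Injective ρ)
    (hV : ∀ h, ‖V h‖ = ‖h‖) (hg : ∀ g ∈ G, π g = adjoint V ∘L ρ g ∘L V) (a : A) :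
    π a = adjoint V ∘L ρ a ∘L V := by
  obtain ⟨Ls, i, j, hii, hjj, hij, hji, hs⟩ := exists_directSum Hs Ks
  obtain ⟨σ, hσ⟩ := exists_directSum_rep hii hjj hij hji hs π ρ
  have hVV : ∀ x, adjoint V (V x) = x := fun x => by
    have := (ContinuousLinearMap.norm_map_iff_adjoint_comp_self V).mp hV
    exact DFunLike.congr_fun this x
  have hinj : Function.Injective σ := by
    rw [injective_iff_map_eq_zero]
    intro b hb
    rw [← map_eq_zero_iff ρ hρ]
    ext x
    have := congrArg (adjoint j) (DFunLike.congr_fun hb (j x))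
    simpa [hσ, hjj, hij, hji] using this
  let W₁ : Ls.carrier →L[ℂ] Ls.carrier := j ∘L V ∘L adjoint i
  let W₂ : Ls.carrier →L[ℂ] Ls.carrier := j ∘L adjoint j
  let Φ : (Ls.carrier →L[ℂ] Ls.carrier) →ₗ[ℂ] (Ls.carrier →L[ℂ] Ls.carrier) :=
    { toFun := fun T => star W₁ * T * W₁ + star W₂ * T * W₂
      map_add' := fun S T => by simp only [mul_add, add_mul]; abel
      map_smul' := fun z T => by simp }
  have hΦ : ∀ T x, Φ T x = i (adjoint V (adjoint j (T (j (V (adjoint i x)))))) +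
      j (adjoint j (T (j (adjoint j x)))) := fun T x => by
    simp [Φ, W₁, W₂, ContinuousLinearMap.star_eq_adjoint, adjoint_comp]
  have hΦσ : ∀ b x, Φ (σ b) x = i (adjoint V (ρ b (V (adjoint i x)))) +
      j (ρ b (adjoint j x)) := fun b x => by
    simp [hΦ, hσ, hjj, hij]
  have hcp : IsCompletelyPositive Φ := fun n M hM =>
    isPosElem_add (isPosElem_map_conj W₁ hM) (isPosElem_map_conj W₂ hM)
  have h1 : Φ 1 = 1 := by
    ext x; simp [hΦ, hjj, hVV, hs]
  have hlim := h.2.2 Ls σ hinj (fun _ => Φ) (fun _ => ⟨hcp, h1⟩) (fun g hgG => by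
    have : Φ (σ g) = σ g := by
      ext x; rw [hΦσ, hσ, hg g hgG]; simp
    simp [this]) a
  have hfix : Φ (σ a) = σ a := by
    rw [tendsto_const_nhds_iff, norm_eq_zero, sub_eq_zero] at hlim
    exact hlim
  ext x
  have := congrArg (adjoint i) (DFunLike.congr_fun hfix (i x))
  rw [hΦσ, hσ] at this
  simpa [hii, hij, hji] using this.symm

/-- Adding a faithful representation as a direct summand to `ρ` reduces to the case of injective `ρ`
without changing the compression. -/
lemma Hyperrigid.compressionRigid {A : Type*} [CStarAlgebra A] {G : Set A}
    (h : Hyperrigid G) : CompressionRigid G := by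
  intro Hs Ks π ρ V hV hg a
  have := separableSpace_of_adjoin h.1 h.2.1
  obtain ⟨Ms, τ, hτ⟩ := exists_faithful_rep A
  obtain ⟨Ls, i, j, hii, hjj, hij, hji, hs⟩ := exists_directSum Ks Ms
  obtain ⟨σ, hσ⟩ := exists_directSum_rep hii hjj hij hji hs ρ τ
  have hinj : Function.Injective σ := by
    rw [injective_iff_map_eq_zero]
    intro b hb
    rw [← map_eq_zero_iff τ hτ]
    ext x
    have := congrArg (adjoint j) (DFunLike.congr_fun hb (j x))
    simpa [hσ, hjj, hij, hji] using this
  have hcomp : ∀ b, adjoint (i ∘L V) ∘L σ b ∘L (i ∘L V) = adjoint V ∘L ρ b ∘L V := by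
    intro b
    ext x
    simp [adjoint_comp, hσ, hii, hji]
  have hi : ∀ x, ‖i x‖ = ‖x‖ := by
    rw [ContinuousLinearMap.norm_map_iff_adjoint_comp_self]
    ext x; simp [hii]
  rw [← hcomp]
  exact h.compression_of_injective Hs Ls π σ (i ∘L V) hinj (fun x => by simp [hi, hV])
    (fun g hgG => by rw [hcomp, hg g hgG]) a

/-! ### Unital completely positive maps -/

section UCP

variable {H : Type*} [NormedAddCommGroup H] [InnerProductSpace ℂ H] [CompleteSpace H]
  {Φ : (H →L[ℂ] H) →ₗ[ℂ] (H →L[ℂ] H)}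

/-- The matrix `(a i)* (a j)` is `Y* Y`, where `Y` has first row `a` and zeros elsewhere. -/
lemma isPosElem_gram {R : Type*} [Ring R] [StarRing R] {n : ℕ} (a : Fin n → R) :
    IsPosElem (Matrix.of fun i j => star (a i) * a j) := by
  rcases n with _ | m
  · exact ⟨0, by ext i; exact i.elim0⟩
  · refine ⟨Matrix.of fun k j => if k = 0 then a j else 0, ?_⟩
    ext i j
    simp [Matrix.mul_apply, Matrix.star_apply]

lemma IsCompletelyPositive.gram_nonneg (hΦ : IsCompletelyPositive Φ) {n : ℕ}
    (a : Fin n → H →L[ℂ] H) (v : Fin n → H) :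
    0 ≤ (∑ i, ∑ j, inner ℂ (v i) (Φ (star (a i) * a j) (v j))).re := by
  obtain ⟨Z, hZ⟩ := hΦ n _ (isPosElem_gram a)
  have h1 : ∀ i j, Φ (star (a i) * a j) = ∑ k, star (Z k i) * Z k j := fun i j => by
    have := congrFun (congrFun hZ i) j
    simpa [Matrix.mul_apply, Matrix.star_apply] using this
  have h2 : ∑ i, ∑ j, inner ℂ (v i) (Φ (star (a i) * a j) (v j)) =
      ∑ k, inner ℂ (∑ i, Z k i (v i)) (∑ j, Z k j (v j)) := by
    have h3 : ∀ i j, inner ℂ (v i) (Φ (star (a i) * a j) (v j)) =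
        ∑ k, inner ℂ (Z k i (v i)) (Z k j (v j)) := fun i j => by
      rw [h1]
      simp [star_eq_adjoint, adjoint_inner_right]
    simp only [h3, inner_sum, sum_inner]
    rw [Finset.sum_congr rfl fun i _ => Finset.sum_comm, Finset.sum_comm]
    refine Finset.sum_congr rfl fun k _ => Finset.sum_comm
  rw [h2, Complex.re_sum]
  exact Finset.sum_nonneg fun k _ => inner_self_nonneg (𝕜 := ℂ)

/-- The matrix with rows `1, T` and `T*, T* T` is positive, so its image under `Φ` is self-adjoint. -/
lemma IsCompletelyPositive.map_star (hΦ : IsCompletelyPositive Φ)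
    (T : H →L[ℂ] H) : Φ (star T) = star (Φ T) := by
  obtain ⟨Z, hZ⟩ := hΦ 2 _ (isPosElem_gram ![1, T])
  have h := congrArg star hZ
  rw [star_mul, star_star, ← hZ] at h
  have := congrFun (congrFun h 1) 0
  simpa [Matrix.star_apply] using this.symm

/-- The Schwarz inequality for unital completely positive maps, in the form
`(Φ T - S)* (Φ T - S) ≤ Φ (T* T) - Φ (T*) S - S* Φ T + S* S`, tested on a vector. -/
lemma IsCompletelyPositive.schwarz (hΦ : IsCompletelyPositive Φ) (h1 : Φ 1 = 1)
    (T S : H →L[ℂ] H) (ξ : H) :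
    ‖(Φ T - S) ξ‖ ^ 2 ≤ (inner ℂ ξ (Φ (star T * T) ξ) - inner ℂ ξ (Φ (star T) (S ξ))
      - inner ℂ (S ξ) (Φ T ξ) + inner ℂ (S ξ) (S ξ)).re := by
  -- The vector `-Φ T ξ` in the second slot completes the square.
  have h := hΦ.gram_nonneg ![T, 1] ![ξ, -Φ T ξ]
  have h2 : ‖(Φ T - S) ξ‖ ^ 2 = (inner ℂ ((Φ T - S) ξ) ((Φ T - S) ξ)).re :=
    (inner_self_eq_norm_sq (𝕜 := ℂ) _).symm
  have h3 : ∀ x y : H, inner ℂ x (Φ (star T) y) = inner ℂ (Φ T x) y := fun x y => by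
    rw [hΦ.map_star, star_eq_adjoint, adjoint_inner_right]
  have h4 : ∀ x : H, inner ℂ x (Φ 1 x) = inner ℂ x x := fun x => by rw [h1]; rfl
  have h5 := congrArg Complex.re (h4 (-Φ T ξ))
  rw [h2]
  simp only [Fin.sum_univ_two, Matrix.cons_val_zero, Matrix.cons_val_one, star_one, mul_one,
    one_mul, h3, h1, one_apply_eq_self, inner_neg_left, inner_neg_right, Complex.add_re,
    Complex.neg_re, Complex.sub_re, sub_apply, inner_sub_left, inner_sub_right] at h h5 ⊢
  linarith

lemma IsCompletelyPositive.norm_apply_le (hΦ : IsCompletelyPositive Φ) (h1 : Φ 1 = 1)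
    (T : H →L[ℂ] H) (v : H) : ‖Φ T v‖ ≤ ‖T‖ * ‖v‖ := by
  have h := hΦ.schwarz h1 T 0 v
  obtain ⟨S, hS⟩ : ∃ S : H →L[ℂ] H, (‖T‖ ^ 2 : ℂ) • (1 : H →L[ℂ] H) - star T * T = star S * S := by
    have h2 : 0 ≤ (‖T‖ ^ 2 : ℂ) • (1 : H →L[ℂ] H) - star T * T := by
      have := CStarAlgebra.star_mul_le_algebraMap_norm_sq (a := T)
      rw [sub_nonneg]
      convert this using 1
      rw [Algebra.algebraMap_eq_smul_one]
      ext; simp [← Complex.coe_smul]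
    exact CStarAlgebra.nonneg_iff_eq_star_mul_self.mp h2
  have h3 := hΦ.gram_nonneg ![S] ![v]
  simp only [Finset.univ_unique, Finset.sum_singleton, Fin.default_eq_zero,
    Matrix.cons_val_fin_one, ← hS, map_sub, map_smul, h1, sub_apply, smul_apply, one_apply_eq_self,
    inner_sub_right, inner_smul_right, Complex.sub_re, sub_nonneg] at h3
  simp only [sub_zero, zero_apply, map_zero, inner_zero_left, inner_zero_right, add_zero] at h
  have h4 : ‖Φ T v‖ ^ 2 ≤ (‖T‖ * ‖v‖) ^ 2 := by
    refine h.trans (h3.trans (le_of_eq ?_))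
    have : inner ℂ v v = ((‖v‖ ^ 2 : ℝ) : ℂ) := by rw [inner_self_eq_norm_sq_to_K]; simp
    rw [this]
    norm_cast
    ring
  exact le_of_sq_le_sq h4 (by positivity)

end UCP

/-! ### Ultralimits of forms and the Stinespring form -/

section UltraLimit

variable {Y : Type*} [AddCommGroup Y] [Module ℂ Y]

/-- A pointwise bounded sequence of positive semidefinite Hermitian forms converges pointwise along
any ultrafilter to a positive semidefinite Hermitian form. -/
lemma exists_core_of_ultrafilter (U : Ultrafilter ℕ) (B : ℕ → Y →ₗ⋆[ℂ] Y →ₗ[ℂ] ℂ)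
    (hsymm : ∀ k y z, star (B k z y) = B k y z) (hpos : ∀ k y, 0 ≤ (B k y y).re)
    (hbd : ∀ y z, ∃ C : ℝ, ∀ k, ‖B k y z‖ ≤ C) :
    ∃ c : PreInnerProductSpace.Core ℂ Y,
      ∀ y z, Tendsto (fun k => B k y z) U (𝓝 (c.inner y z)) := by
  have hlim : ∀ y z, ∃ w, Tendsto (fun k => B k y z) U (𝓝 w) := fun y z => by
    obtain ⟨C, hC⟩ := hbd y z
    obtain ⟨w, -, hw⟩ := (isCompact_closedBall (0 : ℂ) C).ultrafilter_le_nhds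
      (U.map fun k => B k y z) (by
        rw [le_principal_iff, Ultrafilter.mem_coe, Ultrafilter.mem_map]
        exact Filter.univ_mem' fun k => by simpa using hC k)
    exact ⟨w, hw⟩
  choose w hw using hlim
  refine ⟨{ inner := w, conj_inner_symm := ?_, re_inner_nonneg := ?_, add_left := ?_,
            smul_left := ?_ }, hw⟩
  · intro x y
    refine tendsto_nhds_unique ((hw y x).star) ?_
    simpa only [hsymm] using hw x y
  · intro x
    exact ge_of_tendsto' ((Complex.continuous_re.tendsto _).comp (hw x x)) fun k => hpos k x
  · intro x y z
    refine tendsto_nhds_unique (hw (x + y) z) ?_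
    simpa only [map_add, LinearMap.add_apply] using (hw x z).add (hw y z)
  · intro x y r
    refine tendsto_nhds_unique (hw (r • x) y) ?_
    simpa only [map_smulₛₗ, LinearMap.smul_apply, smul_eq_mul] using
      (hw x y).const_mul (starRingEnd ℂ r)

end UltraLimit

section Form

open scoped TensorProduct

variable {A : Type*} [CStarAlgebra A] {H : Type*} [NormedAddCommGroup H] [InnerProductSpace ℂ H]

/-- The sesquilinear form `⟨a ⊗ x, b ⊗ y⟩ = ⟨π x ξ, Φ (π (a* b)) π y ξ⟩` on the algebraic tensor
product `A ⊗ A`. It is Stinespring's form for the map `Φ ∘ π`, with the vectors restricted to the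
orbit `π(A) ξ`, which is parametrized by the second factor. -/
def stinespringForm [CompleteSpace H] (π : A →⋆ₐ[ℂ] (H →L[ℂ] H))
    (Φ : (H →L[ℂ] H) →ₗ[ℂ] (H →L[ℂ] H)) (ξ : H) :
    A ⊗[ℂ] A →ₗ⋆[ℂ] A ⊗[ℂ] A →ₗ[ℂ] ℂ :=
  TensorProduct.lift (LinearMap.mk₂'ₛₗ (starRingEnd ℂ) (starRingEnd ℂ)
    (fun a x => TensorProduct.lift (LinearMap.mk₂ ℂ
      (fun b y => inner ℂ (π x ξ) (Φ (π (star a * b)) (π y ξ)))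
      (fun b b' y => by simp [mul_add])
      (fun c b y => by simp)
      (fun b y y' => by simp)
      (fun c b y => by simp)))
    (fun a a' x => by ext; simp [add_mul])
    (fun c a x => by ext; simp)
    (fun a x x' => by ext; simp)
    (fun c a x => by ext; simp [mul_comm]))

variable [CompleteSpace H] (π : A →⋆ₐ[ℂ] (H →L[ℂ] H)) {Φ : (H →L[ℂ] H) →ₗ[ℂ] (H →L[ℂ] H)}
  (ξ : H)

lemma stinespringForm_tmul (a x b y : A) :
    stinespringForm π Φ ξ (a ⊗ₜ x) (b ⊗ₜ y) =
      inner ℂ (π x ξ) (Φ (π (star a * b)) (π y ξ)) := rfl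

lemma stinespringForm_symm (hΦ : IsCompletelyPositive Φ) (u v : A ⊗[ℂ] A) :
    star (stinespringForm π Φ ξ v u) = stinespringForm π Φ ξ u v := by
  induction u with
  | zero => simp
  | add u u' hu hu' => simp only [map_add, LinearMap.add_apply, star_add, hu, hu']
  | tmul a x =>
    induction v with
    | zero => simp
    | add v v' hv hv' => simp only [map_add, LinearMap.add_apply, star_add, hv, hv']
    | tmul b y =>
      have : π (star b * a) = star (π (star a * b)) := by simp [← map_star]
      rw [stinespringForm_tmul, stinespringForm_tmul, this, hΦ.map_star, star_eq_adjoint,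
        adjoint_inner_right]
      exact inner_conj_symm _ _

lemma stinespringForm_nonneg (hΦ : IsCompletelyPositive Φ) (u : A ⊗[ℂ] A) :
    0 ≤ (stinespringForm π Φ ξ u u).re := by
  obtain ⟨S, rfl⟩ := TensorProduct.exists_finset u
  have h := hΦ.gram_nonneg (fun i => π (S.equivFin.symm i).1.1)
    (fun i => π (S.equivFin.symm i).1.2 ξ)
  rw [← Finset.sum_coe_sort S, ← Equiv.sum_comp S.equivFin.symm]
  rw [Finset.sum_comm] at h
  simpa [LinearMap.sum_apply, stinespringForm_tmul, ← map_star] using h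

lemma stinespringForm_tmul_norm_le (hΦ : IsCompletelyPositive Φ) (h1 : Φ 1 = 1) (a x b y : A)
    (hξ : ‖ξ‖ ≤ 1) :
    ‖stinespringForm π Φ ξ (a ⊗ₜ x) (b ⊗ₜ y)‖ ≤ ‖x‖ * (‖star a * b‖ * ‖y‖) := by
  have hπ : ∀ z, ‖π z ξ‖ ≤ ‖z‖ := fun z =>
    ((π z).le_of_opNorm_le (NonUnitalStarAlgHom.norm_apply_le π z) ξ).trans
      (mul_le_of_le_one_right (norm_nonneg _) hξ)
  rw [stinespringForm_tmul]
  refine (norm_inner_le_norm _ _).trans ?_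
  gcongr
  · exact hπ x
  · refine (hΦ.norm_apply_le h1 _ _).trans ?_
    gcongr
    · exact NonUnitalStarAlgHom.norm_apply_le π _
    · exact hπ y

lemma stinespringForm_bounded {Φ : ℕ → (H →L[ℂ] H) →ₗ[ℂ] (H →L[ℂ] H)}
    (hΦ : ∀ k, IsCompletelyPositive (Φ k) ∧ Φ k 1 = 1) {ξ : ℕ → H} (hξ : ∀ k, ‖ξ k‖ ≤ 1)
    (u v : A ⊗[ℂ] A) : ∃ C : ℝ, ∀ k, ‖stinespringForm π (Φ k) (ξ k) u v‖ ≤ C := by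
  induction u with
  | zero => exact ⟨0, by simp⟩
  | add u u' hu hu' =>
    obtain ⟨C, hC⟩ := hu
    obtain ⟨C', hC'⟩ := hu'
    refine ⟨C + C', fun k => ?_⟩
    rw [map_add, LinearMap.add_apply]
    exact (norm_add_le _ _).trans (add_le_add (hC k) (hC' k))
  | tmul a x =>
    induction v with
    | zero => exact ⟨0, by simp⟩
    | add v v' hv hv' =>
      obtain ⟨C, hC⟩ := hv
      obtain ⟨C', hC'⟩ := hv'
      refine ⟨C + C', fun k => ?_⟩
      rw [map_add]
      exact (norm_add_le _ _).trans (add_le_add (hC k) (hC' k))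
    | tmul b y =>
      exact ⟨_, fun k => stinespringForm_tmul_norm_le π (ξ k) (hΦ k).1 (hΦ k).2 a x b y (hξ k)⟩

/-- The Schwarz inequality: the defect of `Φ` at `π a`, tested on `ξ`, is controlled by the form at
`a ⊗ 1 - 1 ⊗ a`. -/
lemma norm_sq_le_stinespringForm (hΦ : IsCompletelyPositive Φ) (h1 : Φ 1 = 1) (a : A) :
    ‖(Φ (π a) - π a) ξ‖ ^ 2 ≤
      (stinespringForm π Φ ξ (a ⊗ₜ 1 - 1 ⊗ₜ a) (a ⊗ₜ 1 - 1 ⊗ₜ a)).re := by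
  refine (hΦ.schwarz h1 (π a) (π a) ξ).trans (le_of_eq (congrArg Complex.re ?_))
  simp only [map_sub, LinearMap.sub_apply, stinespringForm_tmul]
  simp [h1, ← map_star]
  ring

/-- Left multiplication on the first tensor factor is adjointable for the form. -/
lemma stinespringForm_smul_left (a : A) (u v : A ⊗[ℂ] A) :
    stinespringForm π Φ ξ (LinearMap.rTensor A (LinearMap.mulLeft ℂ a) u) v =
      stinespringForm π Φ ξ u (LinearMap.rTensor A (LinearMap.mulLeft ℂ (star a)) v) := by
  induction u with
  | zero => simp
  | add u u' hu hu' => simp only [map_add, LinearMap.add_apply, hu, hu']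
  | tmul b x =>
    induction v with
    | zero => simp
    | add v v' hv hv' => simp only [map_add, hv, hv']
    | tmul c y => simp [stinespringForm_tmul, mul_assoc]

/-- The form compares the compression of `Φ (π g)` with `π g`; the difference is the defect of `Φ`. -/
lemma stinespringForm_tmul_sub (hΦ : IsCompletelyPositive Φ) (g x y : A) :
    stinespringForm π Φ ξ (g ⊗ₜ x) (1 ⊗ₜ y) - inner ℂ (π (g * x) ξ) (π y ξ) =
      inner ℂ ((Φ (π g) - π g) (π x ξ)) (π y ξ) := by
  rw [stinespringForm_tmul, mul_one, map_star π, hΦ.map_star, star_eq_adjoint, adjoint_inner_right,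
    sub_apply, inner_sub_left, map_mul, mul_apply_eq_comp]

end Form

/-! ### Dilating an ultralimit of UCP maps -/

section KeyLemma

open scoped TensorProduct

lemma exists_isometry_of_dense {X E F : Type*} [AddCommGroup X] [Module ℂ X]
    [NormedAddCommGroup E] [InnerProductSpace ℂ E] [NormedAddCommGroup F] [InnerProductSpace ℂ F]
    [CompleteSpace F] (e : X →ₗ[ℂ] E) (f : X →ₗ[ℂ] F) (he : DenseRange e)
    (hf : ∀ x, ‖f x‖ = ‖e x‖) :
    ∃ V : E →L[ℂ] F, (∀ x, ‖V x‖ = ‖x‖) ∧ ∀ x, V (e x) = f x := by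
  have h : ∀ x, f.extendOfNorm e (e x) = f x := fun x =>
    LinearMap.extendOfNorm_eq he ⟨1, fun x => by simp [hf]⟩ x
  refine ⟨f.extendOfNorm e, fun x => ?_, h⟩
  induction x using he.induction_on with
  | hp => exact isClosed_eq (by fun_prop) (by fun_prop)
  | ih x => rw [h, hf]

lemma separableSpace_of_tensor {A K : Type*} [CStarAlgebra A] [TopologicalSpace.SeparableSpace A]
    [NormedAddCommGroup K] [InnerProductSpace ℂ K] (ι : A ⊗[ℂ] A →ₗ[ℂ] K) (hι : DenseRange ι)
    (hb : ∀ a x, ‖ι (a ⊗ₜ x)‖ ≤ ‖a‖ * ‖x‖) : TopologicalSpace.SeparableSpace K := by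
  let β : A →L[ℂ] A →L[ℂ] K := LinearMap.mkContinuous₂ ((TensorProduct.mk ℂ A A).compr₂ ι) 1
    (fun a x => by simpa using hb a x)
  have hβ : Continuous fun p : A × A => ι (p.1 ⊗ₜ[ℂ] p.2) := by
    change Continuous fun p : A × A => β p.1 p.2
    fun_prop
  have h1 := (TopologicalSpace.isSeparable_range hβ).span (R := ℂ)
  have h2 : Set.range ι ⊆ Submodule.span ℂ (Set.range fun p : A × A => ι (p.1 ⊗ₜ[ℂ] p.2)) := by
    rintro _ ⟨u, rfl⟩
    induction u with
    | zero => simp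
    | tmul a x => exact Submodule.subset_span ⟨(a, x), rfl⟩
    | add u v hu hv => rw [map_add]; exact add_mem hu hv
  rw [← TopologicalSpace.isSeparable_univ_iff, ← hι.closure_range]
  exact (h1.mono h2).closure

variable {A : Type*} [CStarAlgebra A] [TopologicalSpace.SeparableSpace A] {G : Set A}
  {H : Type*} [NormedAddCommGroup H] [InnerProductSpace ℂ H] [CompleteSpace H]

/-- Along an ultrafilter, the Stinespring forms of `Φ k ∘ π` at `ξ k` converge to a form on `A ⊗ A`
whose completion `K` carries a representation `ρ` of `A`. The classes of `1 ⊗ x` span an isometric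
copy of the ultralimit `L` of the orbits `π(A) ξ k`, on which `A` acts by `π₀`. Asymptotic
invariance of `G` says that `π₀` is the compression of `ρ` on `G`, so rigidity gives
`1 ⊗ a = a ⊗ 1` in `K`, and the Schwarz inequality bounds the defect by the norm of the difference. -/
lemma IntertwiningRigid.tendsto_apply (h : IntertwiningRigid G) (U : Ultrafilter ℕ)
    (π : A →⋆ₐ[ℂ] (H →L[ℂ] H)) (Φ : ℕ → (H →L[ℂ] H) →ₗ[ℂ] (H →L[ℂ] H))
    (hΦ : ∀ k, IsCompletelyPositive (Φ k) ∧ Φ k 1 = 1) (ξ : ℕ → H) (hξ : ∀ k, ‖ξ k‖ ≤ 1)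
    (hG : ∀ g ∈ G, Tendsto (fun k => ‖Φ k (π g) - π g‖) U (𝓝 0)) (a : A) :
    Tendsto (fun k => ‖(Φ k (π a) - π a) (ξ k)‖ ^ 2) U (𝓝 0) := by
  obtain ⟨c, hc⟩ := exists_core_of_ultrafilter U (fun k => stinespringForm π (Φ k) (ξ k))
    (fun k => stinespringForm_symm π (ξ k) (hΦ k).1)
    (fun k => stinespringForm_nonneg π (ξ k) (hΦ k).1)
    (stinespringForm_bounded π hΦ hξ)
  obtain ⟨K, _, _, _, ι, ρ, hι, hιc, hρ⟩ := exists_rep_of_core c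
    ((Module.End.rTensorAlgHom ℂ A A).comp (Algebra.lmul ℂ A)) (fun b u v =>
      tendsto_nhds_unique (hc _ _) ((hc u _).congr fun k =>
        (stinespringForm_smul_left π (ξ k) b u v).symm))
  have hρ' : ∀ b x y, ρ b (ι (x ⊗ₜ y)) = ι ((b * x) ⊗ₜ y) := fun b x y => hρ b _
  -- The limit of the cyclic spaces `π(A) ξ k` is the restriction of the limit form to `1 ⊗ A`.
  let cH : PreInnerProductSpace.Core ℂ A :=
    { inner := fun x y => c.inner (1 ⊗ₜ x) (1 ⊗ₜ y)
      conj_inner_symm := fun x y => c.conj_inner_symm _ _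
      re_inner_nonneg := fun x => c.re_inner_nonneg _
      add_left := fun x y z => by rw [TensorProduct.tmul_add]; exact c.add_left _ _ _
      smul_left := fun x y r => by rw [TensorProduct.tmul_smul]; exact c.smul_left _ _ _ }
  have hcH : ∀ x y, Tendsto (fun k => inner ℂ (π x (ξ k)) (π y (ξ k))) U (𝓝 (cH.inner x y)) :=
    fun x y => by
      refine (hc (1 ⊗ₜ x) (1 ⊗ₜ y)).congr fun k => ?_
      simp [stinespringForm_tmul, (hΦ k).2]
  obtain ⟨L, _, _, _, κ, π₀, hκ, hκc, hπ₀⟩ := exists_rep_of_core cH (Algebra.lmul ℂ A)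
    (fun b x y => tendsto_nhds_unique (hcH _ _) (by
      refine (hcH x (star b * y)).congr fun k => ?_
      change inner ℂ (π x (ξ k)) (π (star b * y) (ξ k)) = inner ℂ (π (b * x) (ξ k)) (π y (ξ k))
      rw [map_mul, map_mul, map_star, star_eq_adjoint, mul_apply_eq_comp, mul_apply_eq_comp,
        adjoint_inner_right]))
  replace hπ₀ : ∀ b x, π₀ b (κ x) = κ (b * x) := hπ₀
  have hbound : ∀ b x, ‖ι (b ⊗ₜ x)‖ ≤ ‖b‖ * ‖x‖ := fun b x => by
    have h1 : ‖(inner ℂ (ι (b ⊗ₜ x)) (ι (b ⊗ₜ x)) : ℂ)‖ ≤ ‖x‖ * (‖star b * b‖ * ‖x‖) := by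
      rw [hιc]
      exact le_of_tendsto' (hc _ _).norm fun k =>
        stinespringForm_tmul_norm_le π (ξ k) (hΦ k).1 (hΦ k).2 b x b x (hξ k)
    rw [inner_self_eq_norm_sq_to_K, CStarRing.norm_star_mul_self] at h1
    refine le_of_sq_le_sq ?_ (by positivity)
    calc ‖ι (b ⊗ₜ x)‖ ^ 2 ≤ ‖x‖ * (‖b‖ * ‖b‖ * ‖x‖) := by simpa using h1
      _ = (‖b‖ * ‖x‖) ^ 2 := by ring
  have : TopologicalSpace.SeparableSpace K := separableSpace_of_tensor ι hι hbound
  have hnorm : ∀ x, ‖(ι ∘ₗ TensorProduct.mk ℂ A A 1) x‖ = ‖κ x‖ := fun x => by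
    have : (inner ℂ (ι (1 ⊗ₜ x)) (ι (1 ⊗ₜ x)) : ℂ) = inner ℂ (κ x) (κ x) := by
      rw [hιc, hκc]; rfl
    rw [inner_self_eq_norm_sq_to_K, inner_self_eq_norm_sq_to_K] at this
    norm_cast at this
    exact (sq_eq_sq₀ (norm_nonneg _) (norm_nonneg _)).mp this
  obtain ⟨V, hV, hVκ⟩ := exists_isometry_of_dense κ (ι ∘ₗ TensorProduct.mk ℂ A A 1) hκ hnorm
  have : TopologicalSpace.SeparableSpace L := by
    have hcont : Continuous κ := AddMonoidHomClass.continuous_of_bound κ ‖(1 : A)‖ fun x => by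
      rw [← hnorm]; exact hbound 1 x
    exact hκ.separableSpace hcont
  have hcomp : ∀ g ∈ G, ∀ x y, inner ℂ (π₀ g x) y = inner ℂ (ρ g (V x)) (V y) := by
    intro g hg x y
    induction x, y using hκ.induction_on₂ with
    | hp => exact isClosed_eq (by fun_prop) (by fun_prop)
    | h x y =>
      rw [hπ₀, hκc, hVκ, hVκ, LinearMap.comp_apply, LinearMap.comp_apply, TensorProduct.mk_apply,
        TensorProduct.mk_apply, hρ', hιc, mul_one]
      refine tendsto_nhds_unique (hcH _ _) ((hc _ _).congr_dist ?_)
      refine squeeze_zero (fun k => dist_nonneg) (g := fun k =>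
        ‖x‖ * (‖Φ k (π g) - π g‖ * ‖y‖)) (fun k => ?_)
        (by simpa using ((hG g hg).mul_const ‖y‖).const_mul ‖x‖)
      have hπ : ∀ z, ‖π z (ξ k)‖ ≤ ‖z‖ := fun z =>
        ((π z).le_of_opNorm_le (NonUnitalStarAlgHom.norm_apply_le π z) (ξ k)).trans
          (mul_le_of_le_one_right (norm_nonneg _) (hξ k))
      rw [dist_eq_norm, stinespringForm_tmul_sub π (ξ k) (hΦ k).1]
      calc _ ≤ ‖(Φ k (π g) - π g) (π x (ξ k))‖ * ‖π y (ξ k)‖ := norm_inner_le_norm _ _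
        _ ≤ (‖Φ k (π g) - π g‖ * ‖x‖) * ‖y‖ := by
            gcongr
            · exact (le_opNorm _ _).trans (by gcongr; exact hπ x)
            · exact hπ y
        _ = _ := by ring
  have hfin : ι (1 ⊗ₜ a) = ι (a ⊗ₜ 1) := by
    have := h.apply_eq π₀ ρ V hV hcomp a (κ 1)
    rw [hπ₀, hVκ, hVκ] at this
    simpa [hρ'] using this
  have hzero : c.inner (a ⊗ₜ 1 - 1 ⊗ₜ a) (a ⊗ₜ 1 - 1 ⊗ₜ a) = 0 := by
    rw [← hιc, map_sub, hfin, sub_self, inner_zero_left]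
  have hlim := (Complex.continuous_re.tendsto _).comp (hc (a ⊗ₜ 1 - 1 ⊗ₜ a) (a ⊗ₜ 1 - 1 ⊗ₜ a))
  rw [hzero, Complex.zero_re] at hlim
  exact squeeze_zero (fun k => by positivity)
    (fun k => norm_sq_le_stinespringForm π (ξ k) (hΦ k).1 (hΦ k).2 a) hlim

/-- Choose unit-ball vectors `ξ k` that almost attain the norms `‖Φ k (π a) - π a‖`, and test
convergence on ultrafilters. -/
theorem IntertwiningRigid.hyperrigid {A : Type*} [CStarAlgebra A] {G : Set A} (hGc : G.Countable)
    (hGgen : (StarAlgebra.adjoin ℂ G).topologicalClosure = ⊤) (h : IntertwiningRigid G) :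
    Hyperrigid G := by
  have := separableSpace_of_adjoin hGc hGgen
  refine ⟨hGc, hGgen, fun Hs π _ Φ hΦ hG a => ?_⟩
  have hξ : ∀ k, ∃ ξ : Hs.carrier, ‖ξ‖ ≤ 1 ∧
      ‖Φ k (π a) - π a‖ ≤ 2 * ‖(Φ k (π a) - π a) ξ‖ := fun k => by
    rcases (norm_nonneg (Φ k (π a) - π a)).eq_or_lt with h0 | h0
    · exact ⟨0, by simp, by simp [← h0]⟩
    · obtain ⟨ξ, h1, h2⟩ := exists_lt_apply_of_lt_opNorm _ (half_lt_self h0)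
      exact ⟨ξ, h1.le, by linarith⟩
  choose ξ hξ1 hξ2 using hξ
  rw [tendsto_iff_ultrafilter]
  intro U hU
  have hsq := h.tendsto_apply U π Φ hΦ ξ hξ1 (fun g hg => (hG g hg).mono_left hU) a
  have hlim := (hsq.sqrt).const_mul 2
  rw [Real.sqrt_zero, mul_zero] at hlim
  refine squeeze_zero (fun k => norm_nonneg _) (fun k => ?_) hlim
  rw [Real.sqrt_sq (norm_nonneg _)]
  exact hξ2 k

end KeyLemma

/-- dilation characterizations of hyperrigidity (Theorem `delt`). -/
theorem stmt_0 {A : Type*} [CStarAlgebra A] (G : Set A)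
    (hGc : G.Countable) (hGgen : (StarAlgebra.adjoin ℂ G).topologicalClosure = ⊤) :
    (Hyperrigid G ↔
      ∀ (Hs Ks : SepHilbertSpace)
        (π : A →⋆ₐ[ℂ] (Hs.carrier →L[ℂ] Hs.carrier))
        (ρ : A →⋆ₐ[ℂ] (Ks.carrier →L[ℂ] Ks.carrier))
        (V : Hs.carrier →L[ℂ] Ks.carrier),
        (∀ h, ‖V h‖ = ‖h‖) →
        (∀ g ∈ G, π g = adjoint V ∘L ρ g ∘L V) →
        ∀ a : A, π a = adjoint V ∘L ρ a ∘L V) ∧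
    (Hyperrigid G ↔
      ∀ (Hs Ks : SepHilbertSpace)
        (π : A →⋆ₐ[ℂ] (Hs.carrier →L[ℂ] Hs.carrier))
        (ρ : A →⋆ₐ[ℂ] (Ks.carrier →L[ℂ] Ks.carrier))
        (V : Hs.carrier →L[ℂ] Ks.carrier),
        (∀ h, ‖V h‖ = ‖h‖) →
        (∀ g ∈ G, π g = adjoint V ∘L ρ g ∘L V) →
        ∀ a : A, V ∘L π a = ρ a ∘L V) ∧
    (Hyperrigid G →
      ∀ (Hs Ks : SepHilbertSpace)
        (π : A →⋆ₐ[ℂ] (Hs.carrier →L[ℂ] Hs.carrier))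
        (ρ : A →⋆ₐ[ℂ] (Ks.carrier →L[ℂ] Ks.carrier))
        (V : Hs.carrier →L[ℂ] Ks.carrier),
        (∀ h, ‖V h‖ = ‖h‖) →
        (∀ g ∈ G, π g = adjoint V ∘L ρ g ∘L V) →
        ∀ a : A, π a = adjoint V ∘L ρ a ∘L V) := by
  exact ⟨⟨fun h => h.compressionRigid,
      fun h => (CompressionRigid.intertwiningRigid h).hyperrigid hGc hGgen⟩,
    ⟨fun h => h.compressionRigid.intertwiningRigid,
      fun h => IntertwiningRigid.hyperrigid hGc hGgen h⟩,
    fun h => h.compressionRigid⟩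
end
end

section
/- Let A be a unital C*-algebra, H and K complex Hilbert spaces, π : A → B(H) and ρ : A → B(K) representations, and R ∈ B(H,K) a contraction. Set J = {a ∈ A : π(a) = R*ρ(a)R}. Then J is a selfadjoint linear subspace of A, and: (i) if Rπ(a) = ρ(a)R for all a ∈ A, then J is a two-sided ideal in A; (ii) if S ⊆ A is a selfadjoint subset and Rπ(a) = ρ(a)R for all a ∈ S, then R*R commutes with π(a) for all a ∈ S, RR* commutes with ρ(a) for all a ∈ S, and R*Rπ(a) = R*ρ(a)R for all a ∈ S; (iii) if J is a two-sided ideal, then Rπ(a) = ρ(a)R and (I − R*R)π(a) = π(a)(I − R*R) = 0 for all a ∈ J. -/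
/-!
The point is (iii). For `a ∈ J` with `J` an ideal, `star a * a ∈ J` says that
`‖π a x‖ = ‖ρ a (R x)‖` for every `x`. As `π a x = R* (ρ a (R x))`, the contraction `R*`
preserves the norm of `y = ρ a (R x)`, and this forces `R R* y = y`
(`apply_adjoint_apply_eq_of_norm`), that is, `R (π a x) = ρ a (R x)`. The rest of (iii)
follows by multiplying with `R*` and by taking adjoints, `J` being selfadjoint. Parts (i) and
(ii) rest on the adjoint form `π s R* = R* ρ s` of the intertwining relation
(`comp_adjoint_of_intertwine`).
-/

open scoped ComplexOrder
open Filter Topology ContinuousLinearMap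

noncomputable section

section Aux

variable {A : Type*} [CStarAlgebra A]
variable {H K : Type} [NormedAddCommGroup H] [InnerProductSpace ℂ H] [CompleteSpace H]
  [NormedAddCommGroup K] [InnerProductSpace ℂ K] [CompleteSpace K]

theorem map_star_eq_adjoint (π : A →⋆ₐ[ℂ] (H →L[ℂ] H)) (a : A) :
    π (star a) = adjoint (π a) := by
  rw [map_star, star_eq_adjoint]

theorem map_star_eq_compression {π : A →⋆ₐ[ℂ] (H →L[ℂ] H)} {ρ : A →⋆ₐ[ℂ] (K →L[ℂ] K)}
    {R : H →L[ℂ] K} {a : A} (h : π a = adjoint R ∘L ρ a ∘L R) :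
    π (star a) = adjoint R ∘L ρ (star a) ∘L R := by
  rw [map_star_eq_adjoint, map_star_eq_adjoint, h]
  simp only [adjoint_comp, adjoint_adjoint, comp_assoc]

/-- Taking adjoints in the intertwining relation at `star s` gives the relation for `R*`
at `s`. -/
theorem comp_adjoint_of_intertwine {π : A →⋆ₐ[ℂ] (H →L[ℂ] H)} {ρ : A →⋆ₐ[ℂ] (K →L[ℂ] K)}
    {R : H →L[ℂ] K} {s : A} (h : R ∘L π (star s) = ρ (star s) ∘L R) :
    π s ∘L adjoint R = adjoint R ∘L ρ s := by
  have h' := congrArg adjoint h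
  simpa only [adjoint_comp, map_star_eq_adjoint, adjoint_adjoint] using h'

/-- A vector whose norm is preserved by the adjoint of a contraction `R` is fixed by `R R*`:
expanding, `‖R R* y - y‖² = ‖R R* y‖² - 2 ‖R* y‖² + ‖y‖² ≤ 0`. -/
theorem apply_adjoint_apply_eq_of_norm {R : H →L[ℂ] K} (hR : ‖R‖ ≤ 1) {y : K}
    (hy : ‖adjoint R y‖ = ‖y‖) : R (adjoint R y) = y := by
  have h1 : ‖R (adjoint R y)‖ ≤ ‖y‖ := by
    simpa [hy] using R.le_of_opNorm_le hR (adjoint R y)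
  have h2 := norm_sub_sq (𝕜 := ℂ) (R (adjoint R y)) y
  have h3 : RCLike.re (inner ℂ (R (adjoint R y)) y) = ‖y‖ ^ 2 := by
    rw [← adjoint_inner_right, inner_self_eq_norm_sq, hy]
  rw [h3] at h2
  have h4 : ‖R (adjoint R y)‖ ^ 2 ≤ ‖y‖ ^ 2 := by gcongr
  have h5 : ‖R (adjoint R y) - y‖ ^ 2 = 0 := le_antisymm (by linarith) (sq_nonneg _)
  exact sub_eq_zero.mp (norm_eq_zero.mp (pow_eq_zero_iff two_ne_zero |>.mp h5))

/-- If `π` is the compression of `ρ` both at `a` and at `star a * a`, then `R` intertwines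
at `a`. -/
theorem intertwine_of_compression_star_mul {π : A →⋆ₐ[ℂ] (H →L[ℂ] H)}
    {ρ : A →⋆ₐ[ℂ] (K →L[ℂ] K)} {R : H →L[ℂ] K} (hR : ‖R‖ ≤ 1) {a : A}
    (h : π a = adjoint R ∘L ρ a ∘L R)
    (h2 : π (star a * a) = adjoint R ∘L ρ (star a * a) ∘L R) :
    R ∘L π a = ρ a ∘L R := by
  ext x
  have hx : π a x = adjoint R (ρ a (R x)) := by
    conv_lhs => rw [h]
    rfl
  have h2x : adjoint (π a) (π a x) = adjoint R (adjoint (ρ a) (ρ a (R x))) := by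
    rw [map_mul, map_mul, map_star_eq_adjoint, map_star_eq_adjoint] at h2
    exact DFunLike.congr_fun h2 x
  have hn : ‖π a x‖ ^ 2 = ‖ρ a (R x)‖ ^ 2 := by
    rw [← inner_self_eq_norm_sq (𝕜 := ℂ), ← inner_self_eq_norm_sq (𝕜 := ℂ),
      ← adjoint_inner_right, h2x, adjoint_inner_right, adjoint_inner_right]
  have hy : ‖adjoint R (ρ a (R x))‖ = ‖ρ a (R x)‖ := by
    rw [← hx]
    exact (pow_left_inj₀ (norm_nonneg _) (norm_nonneg _) two_ne_zero).mp hn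
  change R (π a x) = ρ a (R x)
  rw [hx, apply_adjoint_apply_eq_of_norm hR hy]

end Aux

/-- the set `J`, intertwining, and the ideal property (Lemma `pirhr`). -/
theorem stmt_12 {A : Type*} [CStarAlgebra A]
    {H K : Type} [NormedAddCommGroup H] [InnerProductSpace ℂ H] [CompleteSpace H]
    [NormedAddCommGroup K] [InnerProductSpace ℂ K] [CompleteSpace K]
    (π : A →⋆ₐ[ℂ] (H →L[ℂ] H)) (ρ : A →⋆ₐ[ℂ] (K →L[ℂ] K))
    (R : H →L[ℂ] K) (hR : ‖R‖ ≤ 1)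
    (J : Set A) (hJ : J = {a : A | π a = adjoint R ∘L ρ a ∘L R}) :
    -- `J` is a selfadjoint linear subspace
    ((0 : A) ∈ J ∧ (∀ x ∈ J, ∀ y ∈ J, x + y ∈ J) ∧ (∀ (c : ℂ), ∀ x ∈ J, c • x ∈ J) ∧
      (∀ x ∈ J, star x ∈ J)) ∧
    -- (i)
    ((∀ a : A, R ∘L π a = ρ a ∘L R) → IsTwoSidedIdealSet J) ∧
    -- (ii)
    (∀ S : Set A, (∀ s ∈ S, star s ∈ S) → (∀ s ∈ S, R ∘L π s = ρ s ∘L R) →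
      (∀ s ∈ S, (adjoint R ∘L R) ∘L π s = π s ∘L (adjoint R ∘L R)) ∧
      (∀ s ∈ S, (R ∘L adjoint R) ∘L ρ s = ρ s ∘L (R ∘L adjoint R)) ∧
      (∀ s ∈ S, (adjoint R ∘L R) ∘L π s = adjoint R ∘L ρ s ∘L R)) ∧
    -- (iii)
    (IsTwoSidedIdealSet J → ∀ a ∈ J,
      R ∘L π a = ρ a ∘L R ∧
      (1 - adjoint R ∘L R) ∘L π a = 0 ∧ π a ∘L (1 - adjoint R ∘L R) = 0) := by
  subst hJ
  have hzero : π 0 = adjoint R ∘L ρ 0 ∘L R := by simp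
  have hadd : ∀ x y : A, π x = adjoint R ∘L ρ x ∘L R → π y = adjoint R ∘L ρ y ∘L R →
      π (x + y) = adjoint R ∘L ρ (x + y) ∘L R := by
    intro x y hx hy
    rw [map_add, map_add, add_comp, comp_add, ← hx, ← hy]
  have hsmul : ∀ (c : ℂ) (x : A), π x = adjoint R ∘L ρ x ∘L R →
      π (c • x) = adjoint R ∘L ρ (c • x) ∘L R := by
    intro c x hx
    rw [map_smul, map_smul, smul_comp, comp_smul, ← hx]
  refine ⟨⟨hzero, fun x hx y hy => hadd x y hx hy, hsmul,
    fun x hx => map_star_eq_compression hx⟩, ?_, ?_, ?_⟩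
  · intro hI
    refine ⟨hzero, fun x hx y hy => hadd x y hx hy, hsmul, ?_⟩
    intro x hx b
    change π x = adjoint R ∘L ρ x ∘L R at hx
    have hb : π b ∘L adjoint R = adjoint R ∘L ρ b := comp_adjoint_of_intertwine (hI (star b))
    constructor
    · change π (b * x) = adjoint R ∘L ρ (b * x) ∘L R
      rw [map_mul, map_mul, mul_def, mul_def, hx, ← comp_assoc, hb]
      simp only [comp_assoc]
    · change π (x * b) = adjoint R ∘L ρ (x * b) ∘L R
      rw [map_mul, map_mul, mul_def, mul_def, hx]
      simp only [comp_assoc]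
      rw [hI b]
  · intro S hS hI
    have hI' : ∀ s ∈ S, π s ∘L adjoint R = adjoint R ∘L ρ s := fun s hs =>
      comp_adjoint_of_intertwine (hI _ (hS s hs))
    refine ⟨fun s hs => ?_, fun s hs => ?_, fun s hs => ?_⟩
    · rw [comp_assoc, hI s hs, ← comp_assoc, ← comp_assoc, hI' s hs]
    · rw [comp_assoc, ← hI' s hs, ← comp_assoc, ← comp_assoc, hI s hs]
    · rw [comp_assoc, hI s hs]
  · intro hJ
    have key : ∀ a : A, π a = adjoint R ∘L ρ a ∘L R → R ∘L π a = ρ a ∘L R := fun a ha =>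
      intertwine_of_compression_star_mul hR ha (hJ.2.2.2 a ha (star a)).1
    have hleft : ∀ a : A, π a = adjoint R ∘L ρ a ∘L R →
        (adjoint R ∘L R) ∘L π a = π a := by
      intro a ha
      rw [comp_assoc, key a ha, ← ha]
    intro a ha
    refine ⟨key a ha, ?_, ?_⟩
    · rw [sub_comp, hleft a ha, one_def, id_comp, sub_self]
    -- The right-hand relation is the adjoint of the left-hand one at `star a`.
    · have h := congrArg adjoint (hleft (star a) (map_star_eq_compression ha))
      simp only [adjoint_comp, map_star_eq_adjoint, adjoint_adjoint] at h
      rw [comp_sub, h, one_def, comp_id, sub_self]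
end
end

section
/- Let G be a hyperrigid subset of a unital C*-algebra A with unit e, and let λ = {λ_g}_{g∈G} ⊆ ℂ. Then G_λ := {g − λ_g e : g ∈ G} is hyperrigid in A. If, in addition, λ_{g₀} ∉ σ(g₀) for some g₀ ∈ G, and H, K are separable complex Hilbert spaces, π : A → B(H) and ρ : A → B(K) are representations, and R ∈ B(H,K) is a non-isometric contraction such that π(g) = R*ρ(g)R for all g ∈ G_λ, then: (i) J = {a ∈ A : π(a) = R*ρ(a)R} is not a two-sided ideal; (ii) the intertwining relation Rπ(a) = ρ(a)R for all a ∈ A fails. -/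
/-!
Every translate differs from the original generator by a multiple of the unit, and unital maps
fix the unit. Hence the translated set generates the same algebra, and `Φ (π (g - c • 1))` minus
`π (g - c • 1)` equals `Φ (π g) - π g` for every unital linear `Φ`, so hyperrigidity transfers.

If `lam g₀` lies outside the spectrum of `g₀`, the translate `x = g₀ - lam g₀ • 1` is invertible.
An ideal containing it contains `1`, and `1 ∈ J` says `R* R = 1`. An intertwining relation gives
`π x = R* ρ(x) R = R* R π x`, and cancelling the invertible `π x` again yields `R* R = 1`.
-/

open scoped ComplexOrder
open Filter Topology ContinuousLinearMap

noncomputable section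

/-- translating a hyperrigid set by scalars (Proposition `glmp`). -/
theorem stmt_13 {A : Type*} [CStarAlgebra A] (G : Set A) (hG : Hyperrigid G)
    (lam : A → ℂ) :
    Hyperrigid {x : A | ∃ g ∈ G, x = g - lam g • (1 : A)} ∧
    ∀ g₀ ∈ G, lam g₀ ∉ spectrum ℂ g₀ →
      ∀ (H K : Type) [NormedAddCommGroup H] [InnerProductSpace ℂ H] [CompleteSpace H]
        [TopologicalSpace.SeparableSpace H]
        [NormedAddCommGroup K] [InnerProductSpace ℂ K] [CompleteSpace K]
        [TopologicalSpace.SeparableSpace K]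
        (π : A →⋆ₐ[ℂ] (H →L[ℂ] H)) (ρ : A →⋆ₐ[ℂ] (K →L[ℂ] K))
        (R : H →L[ℂ] K), ‖R‖ ≤ 1 → adjoint R ∘L R ≠ 1 →
        (∀ x ∈ {x : A | ∃ g ∈ G, x = g - lam g • (1 : A)},
          π x = adjoint R ∘L ρ x ∘L R) →
        ¬ IsTwoSidedIdealSet {a : A | π a = adjoint R ∘L ρ a ∘L R} ∧
        ¬ ∀ a : A, R ∘L π a = ρ a ∘L R := by
  refine ⟨⟨?_, ?_, ?_⟩, ?_⟩
  · refine (hG.1.image fun g => g - lam g • (1 : A)).mono ?_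
    rintro x ⟨g, hg, rfl⟩
    exact ⟨g, hg, rfl⟩
  · rw [eq_top_iff, ← hG.2.1]
    refine StarSubalgebra.topologicalClosure_mono (StarAlgebra.adjoin_le fun g hg => ?_)
    have hx := StarAlgebra.subset_adjoin ℂ {x : A | ∃ g ∈ G, x = g - lam g • (1 : A)}
      ⟨g, hg, rfl⟩
    have h := add_mem hx (SMulMemClass.smul_mem (lam g) (one_mem (StarAlgebra.adjoin ℂ
      {x : A | ∃ g ∈ G, x = g - lam g • (1 : A)})))
    rwa [sub_add_cancel] at h
  · intro Hs π hπ Φ hΦ hlim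
    refine hG.2.2 Hs π hπ Φ hΦ fun g hg => ?_
    refine (hlim _ ⟨g, hg, rfl⟩).congr fun k => ?_
    rw [map_sub π, map_smul π, map_one π, map_sub (Φ k), map_smul (Φ k), (hΦ k).2,
      sub_sub_sub_cancel_right]
  · intro g₀ hg₀ hspec H K _ _ _ _ _ _ _ _ π ρ R _ hR hJ
    have hu : IsUnit (g₀ - lam g₀ • (1 : A)) := by
      rw [spectrum.notMem_iff, Algebra.algebraMap_eq_smul_one] at hspec
      simpa using hspec.neg
    have hx := hJ _ ⟨g₀, hg₀, rfl⟩
    generalize g₀ - lam g₀ • (1 : A) = x at hu hx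
    obtain ⟨u, rfl⟩ := hu
    refine ⟨fun hI => hR ?_, fun hint => hR ?_⟩
    · have h1 := (hI.2.2.2 _ hx (↑u⁻¹ : A)).1
      rw [Units.inv_mul, Set.mem_ofPred_eq, map_one, map_one] at h1
      exact h1.symm
    · have h2 : (adjoint R ∘L R) * π (u : A) = 1 * π (u : A) := by
        rw [one_mul]
        conv_rhs => rw [hx, ← hint]
        rfl
      exact (u.isUnit.map π).mul_right_cancel h2
end
end
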